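/- Define φ_1(κ) = κκ† for a Lipschitz spinor κ = (ξ,η), giving the 2×2 matrix [[|ξ|^2, ξ conj(η)],[η conj(ξ), |η|^2]]. Then φ_1 surjects onto the positive light-cone: its image is exactly the set of paravector Hermitian matrices P with pdet(P) = P_{11}P_{22} − P_X conj(P_X) = 0 and trace P_{11} + P_{22} > 0. -/

import Mathlib

open CliffordAlgebra

noncomputable section

namespace PaperCliff

noncomputable instance : Invertible (2 : ℝ) := invertibleOfNonzero two_ne_zero

/-- The quadratic form on `ℝ^{p,q}`: `p` generators of square `+1`, `q` of square `-1`. -/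
def sigQ (p q : ℕ) : QuadraticForm ℝ (Fin (p + q) → ℝ) :=
  QuadraticMap.weightedSumSquares ℝ
    (fun i : Fin (p + q) => if (i : ℕ) < p then (1 : ℝ) else -1)

/-- The negative-definite quadratic form for `Cl(0,n)`. -/
def negQ (n : ℕ) : QuadraticForm ℝ (Fin n → ℝ) :=
  QuadraticMap.weightedSumSquares ℝ (fun _ : Fin n => (-1 : ℝ))

variable {M : Type*} [AddCommGroup M] [Module ℝ M]

/-- Clifford conjugation: composite of the grade involution and reversal. -/
def cconj {Q : QuadraticForm ℝ M} (x : CliffordAlgebra Q) : CliffordAlgebra Q :=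
  reverse (involute x)

/-- The paravectors `ℝ ⊕ ℝ^{p,q}` inside the Clifford algebra. -/
def paravec (Q : QuadraticForm ℝ M) : Submodule ℝ (CliffordAlgebra Q) :=
  LinearMap.range (Algebra.linearMap ℝ (CliffordAlgebra Q)) ⊔ LinearMap.range (ι Q)

/-- The real (degree-zero) component of an element of the Clifford algebra,
via the canonical linear isomorphism with the exterior algebra. -/
def clRe {Q : QuadraticForm ℝ M} (x : CliffordAlgebra Q) : ℝ :=
  ExteriorAlgebra.algebraMapInv (CliffordAlgebra.equivExterior Q x)

/-- The reduced basis monomial `i_{j₁} ⋯ i_{j_k}` for a finite set of indices (in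
increasing order). -/
def mono {m : ℕ} (Q : QuadraticForm ℝ (Fin m → ℝ)) (s : Finset (Fin m)) :
    CliffordAlgebra Q :=
  ((s.sort (· ≤ ·)).map fun j => ι Q (Pi.single j 1)).prod

/-- The (paravector) Lipschitz group, as a subgroup of the units: the group generated by
invertible paravectors. -/
def lipUnits (Q : QuadraticForm ℝ M) : Subgroup (CliffordAlgebra Q)ˣ :=
  Subgroup.closure {u : (CliffordAlgebra Q)ˣ | (u : CliffordAlgebra Q) ∈ paravec Q}

/-- The underlying set of the paravector Lipschitz group `$Γ`. -/
def lipGrp (Q : QuadraticForm ℝ M) : Set (CliffordAlgebra Q) :=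
  {x | ∃ u ∈ lipUnits Q, (u : CliffordAlgebra Q) = x}

/-- The Lipschitz monoid `$Γ^▷ = $Γ ∪ {0}`. -/
def lipMon (Q : QuadraticForm ℝ M) : Set (CliffordAlgebra Q) :=
  insert 0 (lipGrp Q)

/-- A Lipschitz spinor: a pair of elements of the Lipschitz monoid, not both zero,
with `ξ ⬝ conj η` a paravector. -/
def IsSpinor (Q : QuadraticForm ℝ M) (ξ η : CliffordAlgebra Q) : Prop :=
  ξ ∈ lipMon Q ∧ η ∈ lipMon Q ∧ ¬(ξ = 0 ∧ η = 0) ∧ ξ * cconj η ∈ paravec Q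

/-- Membership in `SL(2, $Γ)`: entries in the Lipschitz monoid, pseudo-determinant
`a^* d - c^* b = 1`, and `a b^*, c d^*, c^* a, d^* b` paravectors. -/
def IsSL2 (Q : QuadraticForm ℝ M) (a b c d : CliffordAlgebra Q) : Prop :=
  a ∈ lipMon Q ∧ b ∈ lipMon Q ∧ c ∈ lipMon Q ∧ d ∈ lipMon Q ∧
    reverse a * d - reverse c * b = 1 ∧
    a * reverse b ∈ paravec Q ∧ c * reverse d ∈ paravec Q ∧
    reverse c * a ∈ paravec Q ∧ reverse d * b ∈ paravec Q

/-!
On a negative definite quadratic space a paravector `a + v` has norm `(a + v) * (a - v) = a² - Q v`,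
which is positive unless `a + v = 0`. Norms of this kind, `x * star x = star x * x = r` with `r` a
central scalar, multiply, so they extend to the Lipschitz monoid, and `|ξ * star η|² = |ξ|² |η|²` is
the light-cone equation. Conversely a point of the cone with `t₂₂ > 0` is the image of
`(X / √t₂₂, √t₂₂)`; if `t₂₂ = 0` then `|X|² = 0`, hence `X = 0`, and it is the image of `(√t₁₁, 0)`.
-/

section HasNormSq

variable {R A : Type*} [CommSemiring R] [Semiring A] [StarRing A] [Algebra R A]

/-- `x` has square norm `r`: both `x * star x` and `star x * x` are the scalar `r`. This is a
relation rather than a function because not every element of a star algebra has a scalar norm. -/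
def HasNormSq (x : A) (r : R) : Prop :=
  x * star x = algebraMap R A r ∧ star x * x = algebraMap R A r

namespace HasNormSq

variable {x y : A} {r s : R}

protected theorem zero : HasNormSq (0 : A) (0 : R) := by simp [HasNormSq]

protected theorem one : HasNormSq (1 : A) (1 : R) := by simp [HasNormSq]

protected theorem star (h : HasNormSq x r) : HasNormSq (star x) r := by
  simpa only [HasNormSq, star_star] using h.symm

protected theorem mul (hx : HasNormSq x r) (hy : HasNormSq y s) : HasNormSq (x * y) (r * s) := by
  constructor
  · rw [star_mul, mul_assoc, ← mul_assoc y, hy.1, Algebra.commutes, ← mul_assoc, hx.1, map_mul]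
  · rw [star_mul, mul_assoc, ← mul_assoc _ x, hx.2, Algebra.commutes, ← mul_assoc, hy.2,
      mul_comm r, map_mul]

theorem isUnit {u : Rˣ} (h : HasNormSq x (u : R)) : IsUnit x := by
  refine ⟨⟨x, u⁻¹ • star x, ?_, ?_⟩, rfl⟩
  · rw [mul_smul_comm, h.1, Algebra.algebraMap_eq_smul_one, ← Units.smul_def, inv_smul_smul]
  · rw [smul_mul_assoc, h.2, Algebra.algebraMap_eq_smul_one, ← Units.smul_def, inv_smul_smul]

theorem of_isUnit (hx : IsUnit x) (h : x * star x = algebraMap R A r) : HasNormSq x r :=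
  ⟨h, hx.mul_left_cancel (by rw [← mul_assoc, h, Algebra.commutes])⟩

theorem units_inv {v : Aˣ} {u : Rˣ} (h : HasNormSq (v : A) (u : R)) :
    HasNormSq (↑v⁻¹ : A) (↑u⁻¹ : R) := by
  have norm_eq : star v * v = Units.map (algebraMap R A).toMonoidHom u := Units.ext h.2
  refine of_isUnit v⁻¹.isUnit ?_
  calc (↑v⁻¹ : A) * star (↑v⁻¹ : A) = ↑(star v * v)⁻¹ := by simp
    _ = algebraMap R A ↑u⁻¹ := by rw [norm_eq, ← map_inv]; rfl

theorem unique [FaithfulSMul R A] (hr : HasNormSq x r) (hs : HasNormSq x s) : r = s :=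
  FaithfulSMul.algebraMap_injective R A (hr.1.symm.trans hs.1)

end HasNormSq

end HasNormSq

theorem hasNormSq_algebraMap_add_ι {R N : Type*} [CommRing R] [AddCommGroup N] [Module R N]
    (Q : QuadraticForm R N) (a : R) (v : N) :
    HasNormSq (algebraMap R (CliffordAlgebra Q) a + ι Q v) (a * a - Q v) := by
  have comm : Commute (algebraMap R (CliffordAlgebra Q) a) (ι Q v) := Algebra.commutes a _
  have star_eq : star (algebraMap R (CliffordAlgebra Q) a + ι Q v) = algebraMap R _ a - ι Q v := by
    rw [star_add, star_algebraMap, star_ι, sub_eq_add_neg]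
  rw [HasNormSq, star_eq, ← comm.mul_self_sub_mul_self_eq, ← comm.mul_self_sub_mul_self_eq',
    ι_sq_scalar, map_sub, map_mul, and_self]

variable {Q : QuadraticForm ℝ M} {X ξ η x : CliffordAlgebra Q} {r t t₁₁ t₂₂ : ℝ}

theorem cconj_eq_star (x : CliffordAlgebra Q) : cconj x = star x := rfl

theorem algebraMap_mem_paravec (r : ℝ) : algebraMap ℝ (CliffordAlgebra Q) r ∈ paravec Q :=
  Submodule.mem_sup_left ⟨r, rfl⟩

theorem mem_lipMon_of_mem_paravec_of_isUnit (hx : x ∈ paravec Q) (hu : IsUnit x) : x ∈ lipMon Q :=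
  Or.inr ⟨hu.unit, Subgroup.subset_closure hx, rfl⟩

theorem algebraMap_mem_lipMon (hr : r ≠ 0) : algebraMap ℝ (CliffordAlgebra Q) r ∈ lipMon Q :=
  mem_lipMon_of_mem_paravec_of_isUnit (algebraMap_mem_paravec r) ((IsUnit.mk0 r hr).map _)

theorem exists_pos_hasNormSq_of_mem_paravec (hQ : (-Q).PosDef) (hx : x ∈ paravec Q) (hx0 : x ≠ 0) :
    ∃ r : ℝ, 0 < r ∧ HasNormSq x r := by
  obtain ⟨_, ⟨a, rfl⟩, _, ⟨v, rfl⟩, rfl⟩ := Submodule.mem_sup.1 hx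
  refine ⟨a * a - Q v, ?_, hasNormSq_algebraMap_add_ι Q a v⟩
  rw [sub_eq_add_neg]
  by_cases hv : v = 0
  · have ha : a ≠ 0 := by rintro rfl; simp [hv] at hx0
    exact add_pos_of_pos_of_nonneg (mul_self_pos.2 ha) (hQ.nonneg v)
  · exact add_pos_of_nonneg_of_pos (mul_self_nonneg a) (hQ v hv)

theorem mem_lipMon_of_mem_paravec (hQ : (-Q).PosDef) (hx : x ∈ paravec Q) : x ∈ lipMon Q := by
  by_cases hx0 : x = 0
  · exact Or.inl hx0
  · obtain ⟨r, hr, hxr⟩ := exists_pos_hasNormSq_of_mem_paravec hQ hx hx0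
    exact mem_lipMon_of_mem_paravec_of_isUnit hx (HasNormSq.isUnit (u := Units.mk0 r hr.ne') hxr)

theorem exists_pos_hasNormSq_of_mem_lipUnits (hQ : (-Q).PosDef) {u : (CliffordAlgebra Q)ˣ}
    (hu : u ∈ lipUnits Q) : ∃ r : ℝ, 0 < r ∧ HasNormSq (u : CliffordAlgebra Q) r := by
  induction hu using Subgroup.closure_induction with
  | mem u hu => exact exists_pos_hasNormSq_of_mem_paravec hQ hu u.ne_zero
  | one => exact ⟨1, one_pos, HasNormSq.one⟩
  | mul u v _ _ hu hv =>
    obtain ⟨r, hr, hur⟩ := hu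
    obtain ⟨s, hs, hvs⟩ := hv
    exact ⟨r * s, mul_pos hr hs, hur.mul hvs⟩
  | inv u _ hu =>
    obtain ⟨r, hr, hur⟩ := hu
    exact ⟨r⁻¹, inv_pos.2 hr, HasNormSq.units_inv (u := Units.mk0 r hr.ne') hur⟩

theorem hasNormSq_of_mem_lipMon (hx : x ∈ lipMon Q) (h : x * cconj x = algebraMap ℝ _ r) :
    HasNormSq x r := by
  rcases hx with rfl | ⟨u, -, rfl⟩
  · exact ⟨h, by simpa [cconj_eq_star] using h⟩
  · exact HasNormSq.of_isUnit u.isUnit h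

theorem HasNormSq.pos_of_mem_lipMon (h : HasNormSq x r) (hQ : (-Q).PosDef) (hx : x ∈ lipMon Q)
    (hx0 : x ≠ 0) : 0 < r := by
  obtain ⟨u, hu, rfl⟩ := hx.resolve_left hx0
  obtain ⟨s, hs, hus⟩ := exists_pos_hasNormSq_of_mem_lipUnits hQ hu
  exact h.unique hus ▸ hs

theorem HasNormSq.nonneg_of_mem_lipMon (h : HasNormSq x r) (hQ : (-Q).PosDef)
    (hx : x ∈ lipMon Q) : 0 ≤ r := by
  by_cases hx0 : x = 0
  · subst hx0
    exact (h.unique HasNormSq.zero).ge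
  · exact (h.pos_of_mem_lipMon hQ hx hx0).le

namespace IsSpinor

theorem hasNormSq_mul_cconj (h : IsSpinor Q ξ η) (hξ : ξ * cconj ξ = algebraMap ℝ _ t₁₁)
    (hη : η * cconj η = algebraMap ℝ _ t₂₂) : HasNormSq (ξ * cconj η) (t₁₁ * t₂₂) :=
  (hasNormSq_of_mem_lipMon h.1 hξ).mul (hasNormSq_of_mem_lipMon h.2.1 hη).star

theorem trace_pos (hQ : (-Q).PosDef) (h : IsSpinor Q ξ η)
    (hξ : ξ * cconj ξ = algebraMap ℝ _ t₁₁) (hη : η * cconj η = algebraMap ℝ _ t₂₂) :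
    0 < t₁₁ + t₂₂ := by
  obtain ⟨hξ_mem, hη_mem, hne, -⟩ := h
  have norm_ξ := hasNormSq_of_mem_lipMon hξ_mem hξ
  have norm_η := hasNormSq_of_mem_lipMon hη_mem hη
  rcases not_and_or.1 hne with hξ0 | hη0
  · exact add_pos_of_pos_of_nonneg (norm_ξ.pos_of_mem_lipMon hQ hξ_mem hξ0)
      (norm_η.nonneg_of_mem_lipMon hQ hη_mem)
  · exact add_pos_of_nonneg_of_pos (norm_ξ.nonneg_of_mem_lipMon hQ hξ_mem)
      (norm_η.pos_of_mem_lipMon hQ hη_mem hη0)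

end IsSpinor

theorem algebraMap_mul_cconj_algebraMap_sqrt (ht : 0 ≤ t) :
    algebraMap ℝ (CliffordAlgebra Q) √t * cconj (algebraMap ℝ _ √t) = algebraMap ℝ _ t := by
  rw [cconj_eq_star, star_algebraMap, ← map_mul, Real.mul_self_sqrt ht]

theorem inv_smul_mul_cconj_algebraMap {s : ℝ} (hs : s ≠ 0) (X : CliffordAlgebra Q) :
    (s⁻¹ • X) * cconj (algebraMap ℝ _ s) = X := by
  rw [cconj_eq_star, star_algebraMap, ← Algebra.commutes, ← Algebra.smul_def, smul_inv_smul₀ hs]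

theorem inv_sqrt_smul_mul_cconj (ht : 0 < t₂₂) (hX : X * cconj X = algebraMap ℝ _ (t₁₁ * t₂₂)) :
    ((√t₂₂)⁻¹ • X) * cconj ((√t₂₂)⁻¹ • X) = algebraMap ℝ _ t₁₁ := by
  rw [cconj_eq_star] at hX ⊢
  rw [CliffordAlgebra.star_smul, smul_mul_smul_comm, hX, ← mul_inv, Real.mul_self_sqrt ht.le,
    Algebra.smul_def, ← map_mul, mul_comm t₁₁, inv_mul_cancel_left₀ ht.ne']

theorem isSpinor_inv_smul_algebraMap (hQ : (-Q).PosDef) (hX : X ∈ paravec Q) {s : ℝ} (hs : s ≠ 0) :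
    IsSpinor Q (s⁻¹ • X) (algebraMap ℝ _ s) := by
  refine ⟨mem_lipMon_of_mem_paravec hQ (Submodule.smul_mem _ _ hX),
    algebraMap_mem_lipMon hs, ?_, ?_⟩
  · simp [hs]
  · rwa [inv_smul_mul_cconj_algebraMap hs]

theorem isSpinor_algebraMap_zero {s : ℝ} (hs : s ≠ 0) : IsSpinor Q (algebraMap ℝ _ s) 0 :=
  ⟨algebraMap_mem_lipMon hs, Or.inl rfl, by simp [hs], by simp [cconj_eq_star]⟩

theorem exists_isSpinor_of_lightcone (hQ : (-Q).PosDef) (hX : X ∈ paravec Q)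
    (hdet : X * cconj X = algebraMap ℝ _ (t₁₁ * t₂₂)) (htrace : 0 < t₁₁ + t₂₂) :
    ∃ ξ η : CliffordAlgebra Q, IsSpinor Q ξ η ∧ ξ * cconj ξ = algebraMap ℝ _ t₁₁ ∧
      η * cconj η = algebraMap ℝ _ t₂₂ ∧ ξ * cconj η = X := by
  have hX_mem := mem_lipMon_of_mem_paravec hQ hX
  have norm_X := hasNormSq_of_mem_lipMon hX_mem hdet
  have t₂₂_nonneg : 0 ≤ t₂₂ := by
    by_contra! hneg
    exact (mul_neg_of_pos_of_neg (by linarith) hneg).not_ge (norm_X.nonneg_of_mem_lipMon hQ hX_mem)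
  rcases t₂₂_nonneg.eq_or_lt with rfl | hpos
  · have X_eq_zero : X = 0 := by
      by_contra hX0
      exact (norm_X.pos_of_mem_lipMon hQ hX_mem hX0).ne' (mul_zero t₁₁)
    have t₁₁_pos : 0 < t₁₁ := by simpa using htrace
    exact ⟨algebraMap ℝ _ √t₁₁, 0, isSpinor_algebraMap_zero (Real.sqrt_pos.2 t₁₁_pos).ne',
      algebraMap_mul_cconj_algebraMap_sqrt t₁₁_pos.le, by simp, by simp [cconj_eq_star, X_eq_zero]⟩
  · have sqrt_ne_zero : √t₂₂ ≠ 0 := (Real.sqrt_pos.2 hpos).ne'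
    exact ⟨(√t₂₂)⁻¹ • X, algebraMap ℝ _ √t₂₂, isSpinor_inv_smul_algebraMap hQ hX sqrt_ne_zero,
      inv_sqrt_smul_mul_cconj hpos hdet, algebraMap_mul_cconj_algebraMap_sqrt hpos.le,
      inv_smul_mul_cconj_algebraMap sqrt_ne_zero X⟩

theorem basepoint_image_is_lightcone_general (hQ : (-Q).PosDef) (t₁₁ t₂₂ : ℝ)
    (X : CliffordAlgebra Q) (hX : X ∈ paravec Q) :
    (∃ ξ η : CliffordAlgebra Q, IsSpinor Q ξ η ∧
        ξ * cconj ξ = algebraMap ℝ (CliffordAlgebra Q) t₁₁ ∧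
        η * cconj η = algebraMap ℝ (CliffordAlgebra Q) t₂₂ ∧
        ξ * cconj η = X) ↔
      (X * cconj X = algebraMap ℝ (CliffordAlgebra Q) (t₁₁ * t₂₂) ∧ 0 < t₁₁ + t₂₂) := by
  constructor
  · rintro ⟨ξ, η, h, hξ, hη, rfl⟩
    exact ⟨(h.hasNormSq_mul_cconj hξ hη).1, h.trace_pos hQ hξ hη⟩
  · rintro ⟨hdet, htrace⟩
    exact exists_isSpinor_of_lightcone hQ hX hdet htrace

theorem posDef_neg_negQ (n : ℕ) : (-negQ n).PosDef := by
  intro v hv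
  obtain ⟨i, hi⟩ := Function.ne_iff.1 hv
  have neg_negQ_apply : (-negQ n) v = ∑ j, v j * v j := by
    simp [negQ, QuadraticMap.weightedSumSquares_apply]
  rw [neg_negQ_apply]
  exact Finset.sum_pos' (fun j _ => mul_self_nonneg (v j)) ⟨i, Finset.mem_univ i, mul_self_pos.2 hi⟩

/-- The map `φ₁(κ) = κ κ†` surjects onto the positive light-cone: a
paravector Hermitian matrix `[[t₁₁, X],[conj X, t₂₂]]` (with `t₁₁, t₂₂ ∈ ℝ` and `X` a
paravector) is of the form `[[|ξ|², ξ conj η],[η conj ξ, |η|²]]` for some Lipschitz spinor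
`(ξ,η)` if and only if its pseudo-determinant `t₁₁ t₂₂ − X conj X` vanishes and its trace
`t₁₁ + t₂₂` is positive. -/
theorem basepoint_image_is_lightcone (n : ℕ) (t₁₁ t₂₂ : ℝ)
    (X : CliffordAlgebra (negQ n)) (hX : X ∈ paravec (negQ n)) :
    (∃ ξ η : CliffordAlgebra (negQ n), IsSpinor (negQ n) ξ η ∧
        ξ * cconj ξ = algebraMap ℝ (CliffordAlgebra (negQ n)) t₁₁ ∧
        η * cconj η = algebraMap ℝ (CliffordAlgebra (negQ n)) t₂₂ ∧
        ξ * cconj η = X) ↔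
      (X * cconj X = algebraMap ℝ (CliffordAlgebra (negQ n)) (t₁₁ * t₂₂) ∧
        0 < t₁₁ + t₂₂) :=
  basepoint_image_is_lightcone_general (posDef_neg_negQ n) t₁₁ t₂₂ X hX

end PaperCliff
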